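/- arXiv:2212.07170 — 4 statements merged into one kernel-verified Lean document; each statement's English description precedes it below -/
import Mathlib

section
/- Let an m-stage implicit Runge-Kutta method with coefficient matrix A, weights b and nodes c satisfy: A is invertible, b_j ≠ 0 for all j = 1,…,m, the nodes c_1,…,c_m are pairwise distinct, and the simplifying conditions C(m) and D(m) hold. Then b^T x ≠ 0 for every eigenvector x ∈ ℂ^m of A. -/
/-! STATEMENT 0: For an m-stage implicit Runge-Kutta method `(A, b, c)` with `A`
invertible, nonzero weights, pairwise distinct nodes, and the simplifying conditions
`C(m)` and `D(m)`, one has `bᵀ x ≠ 0` for every (complex) eigenvector `x` of `A`. -/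

open Finset

theorem rk_weight_dot_eigenvector_ne_zero
    (m : ℕ) (hm : 0 < m)
    (A : Matrix (Fin m) (Fin m) ℝ) (b c : Fin m → ℝ)
    (hA : IsUnit A.det)
    (hb : ∀ j, b j ≠ 0)
    (hc : Function.Injective c)
    (hCcond : ∀ k ∈ Finset.Icc 1 m, ∀ i, ∑ j, A i j * c j ^ (k - 1) = c i ^ k / (k : ℝ))
    (hDcond : ∀ k ∈ Finset.Icc 1 m, ∀ j,
      ∑ i, b i * c i ^ (k - 1) * A i j = b j * (1 - c j ^ k) / (k : ℝ))
    (lam : ℂ) (x : Fin m → ℂ) (hx : x ≠ 0)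
    (heig : (A.map (Complex.ofReal)).mulVec x = lam • x) :
    ∑ j, (b j : ℂ) * x j ≠ 0 := by
  intro h0
  have key : ∀ k : ℕ, k ≤ m → ∑ j, (b j : ℂ) * x j * (c j : ℂ) ^ k = 0 := by
    intro k
    induction k with
    | zero => intro _; simpa using h0
    | succ k ih =>
      intro hk
      have ihk := ih (by omega)
      have hD : ∀ j, ∑ i, (b i : ℂ) * (c i : ℂ) ^ k * (A i j : ℂ)
          = (b j : ℂ) * (1 - (c j : ℂ) ^ (k + 1)) / ((k + 1 : ℕ) : ℂ) := by
        intro j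
        have h := hDcond (k + 1) (Finset.mem_Icc.mpr ⟨by omega, hk⟩) j
        rw [Nat.add_sub_cancel] at h
        exact_mod_cast congrArg Complex.ofReal h
      have hE : ∀ i, ∑ j, (A i j : ℂ) * x j = lam * x i := by
        intro i
        simpa [Matrix.mulVec, dotProduct] using congrFun heig i
      have h1 : ∑ i, (b i : ℂ) * (c i : ℂ) ^ k * ∑ j, (A i j : ℂ) * x j = 0 := by
        calc _ = lam * ∑ j, (b j : ℂ) * x j * (c j : ℂ) ^ k := by
              rw [Finset.mul_sum]
              refine Finset.sum_congr rfl fun i _ => ?_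
              rw [hE]; ring
          _ = 0 := by rw [ihk, mul_zero]
      have h2 : ∑ i, (b i : ℂ) * (c i : ℂ) ^ k * ∑ j, (A i j : ℂ) * x j
          = (∑ j, (b j : ℂ) * x j - ∑ j, (b j : ℂ) * x j * (c j : ℂ) ^ (k + 1))
            / ((k + 1 : ℕ) : ℂ) := by
        simp_rw [Finset.mul_sum]
        rw [Finset.sum_comm, ← Finset.sum_sub_distrib, Finset.sum_div]
        refine Finset.sum_congr rfl fun j _ => ?_
        have : ∑ i, (b i : ℂ) * (c i : ℂ) ^ k * ((A i j : ℂ) * x j)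
            = (∑ i, (b i : ℂ) * (c i : ℂ) ^ k * (A i j : ℂ)) * x j := by
          rw [Finset.sum_mul]
          refine Finset.sum_congr rfl fun i _ => ?_
          ring
        rw [this, hD]; ring
      rw [h1, h0] at h2
      have hk0 : ((k + 1 : ℕ) : ℂ) ≠ 0 := Nat.cast_ne_zero.mpr (by omega)
      have h3 := (div_eq_zero_iff.mp h2.symm).resolve_right hk0
      simpa using h3
  have hinj : Function.Injective (fun j => (c j : ℂ)) :=
    Complex.ofReal_injective.comp hc
  have hz := Matrix.eq_zero_of_forall_pow_sum_mul_pow_eq_zero (v := fun j => (b j : ℂ) * x j)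
    hinj (fun i => key i (le_of_lt i.2))
  apply hx
  funext j
  have hj := congrFun hz j
  simpa [hb j] using hj
end

section
/- Let an m-stage implicit Runge-Kutta method with coefficient matrix A, weights b and nodes c satisfy: A is invertible, b_j ≠ 0 for all j = 1,…,m, the nodes c_1,…,c_m are pairwise distinct, and the simplifying conditions C(m) and D(m) hold. Then 𝟙^T y ≠ 0 for every eigenvector y ∈ ℂ^m of the transpose A^T. -/
/-! STATEMENT 1: For an m-stage implicit Runge-Kutta method `(A, b, c)` with `A`
invertible, nonzero weights, pairwise distinct nodes, and the simplifying conditions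
`C(m)` and `D(m)`, one has `𝟙ᵀ y ≠ 0` for every (complex) eigenvector `y` of `Aᵀ`. -/

open Finset

theorem rk_ones_dot_transpose_eigenvector_ne_zero
    (m : ℕ) (hm : 0 < m)
    (A : Matrix (Fin m) (Fin m) ℝ) (b c : Fin m → ℝ)
    (hA : IsUnit A.det)
    (hb : ∀ j, b j ≠ 0)
    (hc : Function.Injective c)
    (hCcond : ∀ k ∈ Finset.Icc 1 m, ∀ i, ∑ j, A i j * c j ^ (k - 1) = c i ^ k / (k : ℝ))
    (hDcond : ∀ k ∈ Finset.Icc 1 m, ∀ j,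
      ∑ i, b i * c i ^ (k - 1) * A i j = b j * (1 - c j ^ k) / (k : ℝ))
    (lam : ℂ) (y : Fin m → ℂ) (hy : y ≠ 0)
    (heig : ((A.map (Complex.ofReal)).transpose).mulVec y = lam • y) :
    ∑ j, y j ≠ 0 := by
  intro h0
  have key : ∀ k : ℕ, k < m + 1 → ∑ j, y j * ((c j : ℝ) : ℂ) ^ k = 0 := by
    intro k
    induction k with
    | zero => intro _; simpa using h0
    | succ k ih =>
      intro hk
      have ih' := ih (by omega)
      have hC : ∀ i, ∑ j, (A i j : ℂ) * (c j : ℂ) ^ k = (c i : ℂ) ^ (k + 1) / ((k + 1 : ℕ) : ℂ) := by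
        intro i
        have h := hCcond (k + 1) (Finset.mem_Icc.mpr ⟨by omega, by omega⟩) i
        rw [Nat.add_sub_cancel] at h
        exact_mod_cast congrArg Complex.ofReal h
      have hE : ∀ j, ∑ i, (A i j : ℂ) * y i = lam * y j := by
        intro j
        have h := congrFun heig j
        simpa [Matrix.mulVec, dotProduct] using h
      have hk0 : ((k + 1 : ℕ) : ℂ) ≠ 0 := by exact_mod_cast Nat.succ_ne_zero k
      have h1 : ∑ i, y i * (c i : ℂ) ^ (k + 1) / ((k + 1 : ℕ) : ℂ) = 0 := by
        calc ∑ i, y i * (c i : ℂ) ^ (k + 1) / ((k + 1 : ℕ) : ℂ)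
            = ∑ i, ∑ j, y i * ((A i j : ℂ) * (c j : ℂ) ^ k) := by
              refine Finset.sum_congr rfl fun i _ => ?_
              rw [← Finset.mul_sum, hC i, mul_div_assoc]
          _ = ∑ j, ∑ i, y i * ((A i j : ℂ) * (c j : ℂ) ^ k) := Finset.sum_comm
          _ = ∑ j, lam * (y j * (c j : ℂ) ^ k) := by
              refine Finset.sum_congr rfl fun j _ => ?_
              rw [← mul_assoc, ← hE j, Finset.sum_mul]
              exact Finset.sum_congr rfl fun i _ => by ring
          _ = 0 := by rw [← Finset.mul_sum, ih', mul_zero]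
      rw [← Finset.sum_div, div_eq_zero_iff] at h1
      exact h1.resolve_right hk0
  apply hy
  refine Matrix.eq_zero_of_forall_pow_sum_mul_pow_eq_zero
    (f := fun j => ((c j : ℝ) : ℂ)) (Complex.ofReal_injective.comp hc) ?_
  intro i
  exact key i (by omega)
end

section
/- Let A ∈ ℝ^{m×m} be invertible, let λ ∈ ℂ be an eigenvalue of A^{−1}, and let ζ ∈ ℂ with ζ ≠ 1 and ζ·R(∞) ≠ 1, so that the matrix Δ(ζ) = (ζ/(1−ζ)·𝟙 b^T + A)^{−1} exists. Then det(λI − Δ(ζ)) = [ζ/(1 − ζ·R(∞))] · b^T adj(λA − I) A^{−1} 𝟙 · det(A^{−1}), where adj denotes the adjugate matrix. -/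
/-! STATEMENT 2: determinant formula for `det(λI − Δ(ζ))` when `λ` is an eigenvalue of
`A⁻¹`, with `Δ(ζ) = (ζ/(1−ζ)·𝟙 bᵀ + A)⁻¹` and `R(∞) = 1 − bᵀ A⁻¹ 𝟙`. -/

open Matrix Finset

theorem det_add_vecMulVec_unit {m : ℕ} (B : Matrix (Fin m) (Fin m) ℂ) (hB : IsUnit B.det)
    (u v : Fin m → ℂ) :
    (B + vecMulVec u v).det = B.det * (1 + v ⬝ᵥ (B⁻¹ *ᵥ u)) := by
  have h : B + vecMulVec u v = B * (1 + vecMulVec (B⁻¹ *ᵥ u) v) := by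
    rw [mul_add, mul_one, mul_vecMulVec, mulVec_mulVec, mul_nonsing_inv _ hB, one_mulVec]
  rw [h, det_mul, vecMulVec_eq Unit, det_one_add_replicateCol_mul_replicateRow]

theorem det_add_vecMulVec_adj {m : ℕ} (B : Matrix (Fin m) (Fin m) ℂ) (u v : Fin m → ℂ) :
    (B + vecMulVec u v).det = B.det + v ⬝ᵥ (B.adjugate *ᵥ u) := by
  have hunit : ∀ B : Matrix (Fin m) (Fin m) ℂ, B.det ≠ 0 →
      (B + vecMulVec u v).det = B.det + v ⬝ᵥ (B.adjugate *ᵥ u) := by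
    intro B hB
    rw [det_add_vecMulVec_unit B (isUnit_iff_ne_zero.mpr hB), Matrix.inv_def, smul_mulVec,
      dotProduct_smul, Ring.inverse_eq_inv', smul_eq_mul]
    field_simp
  let f : ℂ → Matrix (Fin m) (Fin m) ℂ := fun x => scalar (Fin m) x - (-B)
  have hf : Continuous f := by
    have : f = fun x => x • (1 : Matrix (Fin m) (Fin m) ℂ) - (-B) := by
      funext x; simp [f, smul_one_eq_diagonal]
    rw [this]; fun_prop
  have hd : Dense {x : ℂ | (f x).det ≠ 0} := by
    have hfin : ({x : ℂ | (f x).det = 0}).Finite := by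
      refine (Polynomial.finite_setOfPred_isRoot (charpoly_monic (-B)).ne_zero).subset ?_
      intro x hx
      simpa [Polynomial.IsRoot, eval_charpoly, f] using hx
    exact hfin.countable.dense_compl ℂ
  have key := Continuous.ext_on (f := fun x => (f x + vecMulVec u v).det)
    (g := fun x => (f x).det + v ⬝ᵥ ((f x).adjugate *ᵥ u)) hd
    (by fun_prop)
    (hf.matrix_det.add (continuous_const.dotProduct (hf.matrix_adjugate.matrix_mulVec continuous_const)))
    (fun x hx => hunit _ hx)
  have := congrFun key 0
  simpa [f] using this

theorem det_lambda_id_sub_Delta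
    (m : ℕ) (A : Matrix (Fin m) (Fin m) ℝ) (b : Fin m → ℝ)
    (hA : IsUnit A.det)
    (AC : Matrix (Fin m) (Fin m) ℂ) (hAC : AC = A.map Complex.ofReal)
    (bC : Fin m → ℂ) (hbC : bC = fun j => (b j : ℂ))
    (Rinf : ℂ) (hRinf : Rinf = 1 - bC ⬝ᵥ (AC⁻¹.mulVec (fun _ => 1)))
    (ζ : ℂ) (hζ1 : ζ ≠ 1) (hζR : ζ * Rinf ≠ 1)
    (lam : ℂ)
    (hlam : ∃ x : Fin m → ℂ, x ≠ 0 ∧ (AC⁻¹).mulVec x = lam • x) :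
    (lam • (1 : Matrix (Fin m) (Fin m) ℂ)
        - ((ζ / (1 - ζ)) • Matrix.vecMulVec (fun _ => (1 : ℂ)) bC + AC)⁻¹).det
      = (ζ / (1 - ζ * Rinf))
          * (bC ⬝ᵥ ((lam • AC - 1).adjugate.mulVec (AC⁻¹.mulVec (fun _ => 1))))
          * (AC⁻¹).det := by
  have hU : IsUnit AC.det := by
    have : AC.det = ((A.det : ℝ) : ℂ) := by
      rw [hAC]; exact (RingHom.map_det Complex.ofRealHom A).symm
    rw [this]
    exact isUnit_iff_ne_zero.mpr (Complex.ofReal_ne_zero.mpr hA.ne_zero)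
  clear hAC hbC
  have h1 : (1 - ζ) ≠ 0 := sub_ne_zero.mpr hζ1.symm
  have h2 : (1 - ζ * Rinf) ≠ 0 := sub_ne_zero.mpr hζR.symm
  have hd0 : AC.det ≠ 0 := hU.ne_zero
  set e : Fin m → ℂ := fun _ => 1 with he
  set M := (ζ / (1 - ζ)) • vecMulVec e bC + AC with hM
  have hdetM : M.det = AC.det * ((1 - ζ * Rinf) / (1 - ζ)) := by
    rw [hM, add_comm, ← smul_vecMulVec, det_add_vecMulVec_unit _ hU, mulVec_smul, dotProduct_smul,
      smul_eq_mul, hRinf]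
    field_simp
    ring
  have hMU : IsUnit M.det := by
    rw [hdetM]
    exact isUnit_iff_ne_zero.mpr (mul_ne_zero hd0 (div_ne_zero h2 h1))
  have hsing : (lam • AC - 1).det = 0 := by
    obtain ⟨x, hx, hxe⟩ := hlam
    refine exists_mulVec_eq_zero_iff.mp ⟨x, hx, ?_⟩
    rw [sub_mulVec, smul_mulVec, ← mulVec_smul, ← hxe, mulVec_mulVec, mul_nonsing_inv _ hU, sub_self]
  have hadj : (lam • AC - 1).adjugate * AC⁻¹ = lam • (lam • AC - 1).adjugate := by
    have h := adjugate_mul (lam • AC - 1)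
    rw [hsing, zero_smul, mul_sub, mul_one, sub_eq_zero] at h
    conv_lhs => rw [← h]
    rw [mul_smul_comm, smul_mul_assoc, mul_assoc, mul_nonsing_inv _ hU, mul_one]
  have hmul : (lam • (1 : Matrix (Fin m) (Fin m) ℂ) - M⁻¹).det * M.det
      = lam * (ζ / (1 - ζ)) * (bC ⬝ᵥ ((lam • AC - 1).adjugate *ᵥ e)) := by
    rw [← det_mul, sub_mul, nonsing_inv_mul _ hMU, smul_mul_assoc, one_mul]
    have : lam • M - 1 = (lam • AC - 1) + vecMulVec ((lam * (ζ / (1 - ζ))) • e) bC := by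
      rw [hM, smul_add, smul_smul, smul_vecMulVec]; abel
    rw [this, det_add_vecMulVec_adj, hsing, zero_add, mulVec_smul, dotProduct_smul, smul_eq_mul]
  rw [mulVec_mulVec, hadj, smul_mulVec, dotProduct_smul, smul_eq_mul, det_nonsing_inv,
    Ring.inverse_eq_inv']
  apply mul_right_cancel₀ hMU.ne_zero
  rw [hmul, hdetM]
  field_simp
end

section
/- For every integer m ≥ 1 and every θ ∈ [−π,π], every complex zero of the polynomial z ↦ M_m(θ,z) = P_m(z) − e^{iθ} P_m(−z) is purely imaginary. -/
/-! STATEMENT 5: every zero of `M_m(θ,z) = P_m(z) − e^{iθ} P_m(−z)` is purely imaginary,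
where `P_m(z) = Σ_{j=0}^m p_j z^j`, `p_j = (2m−j)!/(j!(m−j)!)` is the numerator of the
`(m,m)`-Padé approximant of `e^z`. -/

open Finset

/-- The numerator `P_m` of the `(m,m)`-Padé approximant of the exponential. -/
noncomputable def Pgauss (m : ℕ) (z : ℂ) : ℂ :=
  ∑ j ∈ Finset.range (m + 1),
    (((2 * m - j).factorial : ℂ) / ((j.factorial : ℂ) * ((m - j).factorial : ℂ))) * z ^ j

/-- `M_m(θ,z) = P_m(z) − e^{iθ} P_m(−z)`. -/
noncomputable def Mgauss (m : ℕ) (θ : ℝ) (z : ℂ) : ℂ :=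
  Pgauss m z - Complex.exp (θ * Complex.I) * Pgauss m (-z)

/-- Coefficients, extended by zero. -/
noncomputable def gcoef (m j : ℕ) : ℂ :=
  if j ≤ m then ((2 * m - j).factorial : ℂ) / ((j.factorial : ℂ) * ((m - j).factorial : ℂ)) else 0

/-- `P_m` as a polynomial. -/
noncomputable def gpoly (m : ℕ) : Polynomial ℂ :=
  ∑ j ∈ Finset.range (m + 1), Polynomial.C (gcoef m j) * Polynomial.X ^ j

lemma gpoly_coeff (m j : ℕ) : (gpoly m).coeff j = gcoef m j := by
  unfold gpoly
  simp only [Polynomial.finsetSum_coeff, Polynomial.coeff_C_mul, Polynomial.coeff_X_pow]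
  simp only [mul_ite, mul_one, mul_zero, Finset.sum_ite_eq, Finset.mem_range]
  split_ifs with h
  · rfl
  · unfold gcoef
    rw [if_neg (by omega)]

lemma gpoly_eval (m : ℕ) (z : ℂ) : (gpoly m).eval z = Pgauss m z := by
  unfold gpoly Pgauss
  rw [Polynomial.eval_finset_sum]
  refine Finset.sum_congr rfl fun j hj => ?_
  have : j ≤ m := by simpa [Nat.lt_succ_iff] using hj
  simp [gcoef, this]

lemma gcoef_add (k d : ℕ) : gcoef (k + d) k =
    ((k + 2 * d).factorial : ℂ) / ((k.factorial : ℂ) * (d.factorial : ℂ)) := by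
  unfold gcoef
  rw [if_pos (by omega)]
  congr 3
  · congr 1; omega
  · congr 2; omega

lemma gcoef_zero_of (m j : ℕ) (h : m < j) : gcoef m j = 0 := by
  unfold gcoef
  rw [if_neg (by omega)]

lemma gcoef_rec0 (m : ℕ) : gcoef (m + 2) 0 = 2 * (2 * m + 3) * gcoef (m + 1) 0 := by
  have h1 := gcoef_add 0 (m + 2)
  have h2 := gcoef_add 0 (m + 1)
  rw [Nat.zero_add] at h1 h2
  rw [h1, h2]
  have e : 0 + 2 * (m + 2) = (2 * m + 2) + 1 + 1 := by ring
  have e' : 0 + 2 * (m + 1) = 2 * m + 2 := by ring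
  rw [e, e', Nat.factorial_succ (m + 1), Nat.factorial_succ (2 * m + 2 + 1),
    Nat.factorial_succ (2 * m + 2)]
  have f : ((m + 1).factorial : ℂ) ≠ 0 := by exact_mod_cast Nat.factorial_ne_zero _
  have g : ((m : ℂ) + 1 + 1) ≠ 0 := by exact_mod_cast Nat.succ_ne_zero (m + 1)
  push_cast
  field_simp
  ring

lemma gcoef_rec1 (m : ℕ) : gcoef (m + 2) 1 = 2 * (2 * m + 3) * gcoef (m + 1) 1 := by
  have h1 := gcoef_add 1 (m + 1)
  have h2 := gcoef_add 1 m
  rw [show m + 2 = 1 + (m + 1) by ring, show m + 1 = 1 + m by ring] at *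
  rw [h1, h2]
  have e : 1 + 2 * (1 + m) = (1 + 2 * m) + 1 + 1 := by ring
  rw [e, show 1 + m = m + 1 by ring, Nat.factorial_succ m, Nat.factorial_succ (1 + 2 * m + 1),
    Nat.factorial_succ (1 + 2 * m)]
  have f : ((m).factorial : ℂ) ≠ 0 := by exact_mod_cast Nat.factorial_ne_zero _
  have g : ((m : ℂ) + 1) ≠ 0 := Nat.cast_add_one_ne_zero m
  push_cast
  field_simp
  ring

lemma gcoef_rec2 (m k : ℕ) :
    gcoef (m + 2) (k + 2) = 2 * (2 * m + 3) * gcoef (m + 1) (k + 2) + gcoef m k := by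
  rcases lt_or_ge m k with h | h
  · rw [gcoef_zero_of _ _ (by omega), gcoef_zero_of _ _ (by omega), gcoef_zero_of _ _ (by omega)]
    simp
  obtain ⟨d, rfl⟩ := Nat.exists_eq_add_of_le h
  have f : ((k).factorial : ℂ) ≠ 0 := by exact_mod_cast Nat.factorial_ne_zero _
  rcases d with _ | d
  · rw [gcoef_zero_of (k + 0 + 1) _ (by omega)]
    have h1 := gcoef_add (k + 2) 0
    have h2 := gcoef_add k 0
    have f2 : ((k + 2).factorial : ℂ) ≠ 0 := by exact_mod_cast Nat.factorial_ne_zero _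
    simp only [Nat.add_zero, Nat.mul_zero] at *
    rw [h1, h2]
    simp [f, f2]
  · have h1 := gcoef_add (k + 2) (d + 1)
    have h2 := gcoef_add (k + 2) d
    have h3 := gcoef_add k (d + 1)
    rw [show k + (d + 1) + 2 = k + 2 + (d + 1) by ring,
      show k + (d + 1) + 1 = k + 2 + d by ring, h1, h2, h3]
    rw [show k + 2 + 2 * (d + 1) = (k + 2 + 2 * d) + 1 + 1 by ring,
      show k + 2 * (d + 1) = k + 2 + 2 * d by ring, Nat.factorial_succ (k + 2 + 2 * d + 1),
      Nat.factorial_succ (k + 2 + 2 * d), Nat.factorial_succ d, Nat.factorial_succ (k + 1),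
      Nat.factorial_succ k]
    have f2 : ((d).factorial : ℂ) ≠ 0 := by exact_mod_cast Nat.factorial_ne_zero _
    have g : ((d : ℂ) + 1) ≠ 0 := Nat.cast_add_one_ne_zero d
    have g1 : ((k : ℂ) + 1) ≠ 0 := Nat.cast_add_one_ne_zero k
    have g2 : ((k : ℂ) + 1 + 1) ≠ 0 := by exact_mod_cast Nat.succ_ne_zero (k + 1)
    push_cast
    field_simp
    ring

lemma gpoly_rec (m : ℕ) : gpoly (m + 2) =
    Polynomial.C (2 * (2 * (m : ℂ) + 3)) * gpoly (m + 1) + gpoly m * Polynomial.X ^ 2 := by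
  ext j
  rw [Polynomial.coeff_add, Polynomial.coeff_C_mul, Polynomial.coeff_mul_X_pow']
  simp only [gpoly_coeff]
  rcases j with _ | _ | k
  · simp [gcoef_rec0]
  · simp [gcoef_rec1]
  · simp [gcoef_rec2]

lemma Pgauss_rec (m : ℕ) (z : ℂ) :
    Pgauss (m + 2) z = 2 * (2 * (m : ℂ) + 3) * Pgauss (m + 1) z + Pgauss m z * z ^ 2 := by
  simp only [← gpoly_eval]
  rw [gpoly_rec]
  simp

lemma Pgauss_pos (z : ℂ) (hz : 0 ≤ z.re) (h0 : z ≠ 0) (m : ℕ) :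
    0 < (Pgauss (m + 1) z * (starRingEnd ℂ) (z * Pgauss m z)).re := by
  have hn : 0 < z.re * z.re + z.im * z.im := by
    have := Complex.normSq_pos.2 h0
    rwa [Complex.normSq_apply] at this
  induction m with
  | zero =>
    simp [Pgauss, Finset.sum_range_succ]
    nlinarith
  | succ m ih =>
    rw [Pgauss_rec]
    generalize Pgauss (m + 1) z = a at *
    generalize Pgauss m z = b at *
    have e : ((2 * (2 * (m : ℂ) + 3) * a + b * z ^ 2) * (starRingEnd ℂ) (z * a)).re
      = 2 * (2 * (m : ℝ) + 3) * (z.re * (a.re * a.re + a.im * a.im)) +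
        (z.re * z.re + z.im * z.im) * (a * (starRingEnd ℂ) (z * b)).re := by
      have : (2 * (2 * (m : ℂ) + 3)) = ((2 * (2 * (m : ℝ) + 3) : ℝ) : ℂ) := by push_cast; rfl
      rw [this]
      generalize 2 * (2 * (m : ℝ) + 3) = c
      simp [pow_two]
      ring
    rw [e]
    have := mul_pos hn ih
    have : 0 ≤ 2 * (2 * (m : ℝ) + 3) * (z.re * (a.re * a.re + a.im * a.im)) := by
      have := mul_self_nonneg a.re
      have := mul_self_nonneg a.im
      positivity
    linarith

lemma Pgauss_root (m : ℕ) (z : ℂ) (h : Pgauss (m + 1) z = 0) : z.re < 0 := by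
  by_contra hz
  push Not at hz
  by_cases h0 : z = 0
  · subst h0
    rw [← gpoly_eval, ← Polynomial.coeff_zero_eq_eval_zero, gpoly_coeff] at h
    simp [gcoef, Nat.factorial_ne_zero] at h
  · have := Pgauss_pos z hz h0 m
    simp [h] at this

lemma prod_lt (z : ℂ) (hz : 0 < z.re) (s : Multiset ℂ) (hs : ∀ r ∈ s, r.re < 0) :
    0 < (s.map fun r => ‖z - r‖).prod ∧
    (s.map fun r => ‖-(starRingEnd ℂ) z - r‖).prod ≤ (s.map fun r => ‖z - r‖).prod ∧
    (s ≠ 0 → (s.map fun r => ‖-(starRingEnd ℂ) z - r‖).prod < (s.map fun r => ‖z - r‖).prod) := by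
  induction s using Multiset.induction_on with
  | empty => simp
  | cons r s ih =>
    obtain ⟨h1, h2, -⟩ := ih fun r hr => hs r (Multiset.mem_cons_of_mem hr)
    have hr := hs r (Multiset.mem_cons_self r s)
    have hlt : ‖-(starRingEnd ℂ) z - r‖ < ‖z - r‖ := by
      rw [Complex.norm_def, Complex.norm_def]
      apply Real.sqrt_lt_sqrt (Complex.normSq_nonneg _)
      simp [Complex.normSq_apply]
      nlinarith [mul_pos hz (neg_pos.2 hr)]
    have hp : 0 < ‖z - r‖ := lt_of_le_of_lt (norm_nonneg _) hlt
    have key : ‖-(starRingEnd ℂ) z - r‖ * (s.map fun r => ‖-(starRingEnd ℂ) z - r‖).prod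
        < ‖z - r‖ * (s.map fun r => ‖z - r‖).prod :=
      lt_of_le_of_lt (mul_le_mul_of_nonneg_left h2 (norm_nonneg _))
        (mul_lt_mul_of_pos_right hlt h1)
    simp only [Multiset.map_cons, Multiset.prod_cons]
    exact ⟨mul_pos hp h1, key.le, fun _ => key⟩

lemma norm_eval (p : Polynomial ℂ) (z : ℂ) :
    ‖p.eval z‖ = ‖p.leadingCoeff‖ * (p.roots.map fun r => ‖z - r‖).prod := by
  have h := (IsAlgClosed.splits p).eval_eq_prod_roots z
  rw [h, norm_mul]
  congr 1
  induction p.roots using Multiset.induction_on with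
  | empty => simp
  | cons r s ih => simp [ih]

lemma Pgauss_conj (m : ℕ) (z : ℂ) :
    Pgauss m ((starRingEnd ℂ) z) = (starRingEnd ℂ) (Pgauss m z) := by
  simp [Pgauss]

lemma Pgauss_norm_lt (m : ℕ) (z : ℂ) (hz : 0 < z.re) :
    ‖Pgauss (m + 1) (-z)‖ < ‖Pgauss (m + 1) z‖ := by
  have hc : ‖Pgauss (m + 1) (-z)‖ = ‖Pgauss (m + 1) (-(starRingEnd ℂ) z)‖ := by
    rw [← map_neg, Pgauss_conj, RCLike.norm_conj]
  have hl : (gpoly (m + 1)).coeff (m + 1) ≠ 0 := by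
    rw [gpoly_coeff]
    simp [gcoef, Nat.factorial_ne_zero]
  have hne : gpoly (m + 1) ≠ 0 := by
    intro h
    simp [h] at hl
  have hr : (gpoly (m + 1)).roots ≠ 0 := by
    intro h
    have h2 := (IsAlgClosed.splits (gpoly (m + 1))).natDegree_eq_card_roots
    rw [h] at h2
    have := Polynomial.le_natDegree_of_ne_zero hl
    simp at h2
    omega
  rw [hc, ← gpoly_eval, ← gpoly_eval, norm_eval, norm_eval]
  refine mul_lt_mul_of_pos_left ((prod_lt z hz _ fun r h => ?_).2.2 hr) ?_
  · have := (Polynomial.mem_roots'.1 h).2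
    rw [Polynomial.IsRoot, gpoly_eval] at this
    exact Pgauss_root m r this
  · simpa using hne

theorem Mgauss_zeros_purely_imaginary
    (m : ℕ) (hm : 1 ≤ m)
    (θ : ℝ) (hθ : θ ∈ Set.Icc (-Real.pi) Real.pi)
    (z : ℂ) (hz : Mgauss m θ z = 0) :
    z.re = 0 := by
  obtain ⟨n, rfl⟩ := Nat.exists_eq_add_of_le' hm
  have h : ‖Pgauss (n + 1) z‖ = ‖Pgauss (n + 1) (-z)‖ := by
    rw [Mgauss, sub_eq_zero] at hz
    rw [hz, norm_mul, Complex.norm_exp_ofReal_mul_I, one_mul]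
  rcases lt_trichotomy z.re 0 with h1 | h1 | h1
  · have := Pgauss_norm_lt n (-z) (by simpa using h1)
    rw [neg_neg] at this
    linarith
  · exact h1
  · have := Pgauss_norm_lt n z h1
    linarith
end
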